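/- arXiv:1311.0021 — 5 statements merged into one kernel-verified Lean document; each statement's English description precedes it below -/
import Mathlib

section
/- For every real number a > 0 there exist constants c₀ > 0 and x₀ > 0 (depending only on a) such that for all real x ≥ x₀ one has ∑_{n=0}^{∞} xⁿ/(n!)^a ≤ 2·exp(c₀·x^{1/a}). -/
open scoped Nat

/-!
Put `y = x ^ (1 / a)`. Then `x ^ n / (n !) ^ a = (y ^ n / n !) ^ a ≤ exp (a * y)`, uniformly in `n`.
Applied at `x / q` with `0 < q < 1`, this bounds the `n`-th term at `x` by
`q ^ n * exp (a * (x / q) ^ (1 / a))`, and the geometric series does the rest; `q = 1 / 2` yields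
the factor `2`.
-/

section

variable {a x q : ℝ}

theorem pow_div_factorial_rpow_eq_rpow (ha : a ≠ 0) (hx : 0 ≤ x) (n : ℕ) :
    x ^ n / (n ! : ℝ) ^ a = ((x ^ (1 / a)) ^ n / (n ! : ℝ)) ^ a := by
  have hroot : 0 ≤ x ^ (1 / a) := Real.rpow_nonneg hx _
  rw [Real.div_rpow (pow_nonneg hroot n) n !.cast_nonneg, ← Real.rpow_pow_comm hroot,
    ← Real.rpow_mul hx, one_div_mul_cancel ha, Real.rpow_one]

theorem pow_div_factorial_rpow_le_exp (ha : 0 < a) (hx : 0 ≤ x) (n : ℕ) :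
    x ^ n / (n ! : ℝ) ^ a ≤ Real.exp (a * x ^ (1 / a)) := by
  have hroot : 0 ≤ x ^ (1 / a) := Real.rpow_nonneg hx _
  calc
    x ^ n / (n ! : ℝ) ^ a = ((x ^ (1 / a)) ^ n / (n ! : ℝ)) ^ a :=
      pow_div_factorial_rpow_eq_rpow ha.ne' hx n
    _ ≤ Real.exp (x ^ (1 / a)) ^ a := by
      gcongr
      exact Real.pow_div_factorial_le_exp _ hroot n
    _ = Real.exp (a * x ^ (1 / a)) := by rw [← Real.exp_mul, mul_comm]

theorem pow_div_factorial_rpow_le_pow_mul_exp (ha : 0 < a) (hx : 0 ≤ x) (hq : 0 < q) (n : ℕ) :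
    x ^ n / (n ! : ℝ) ^ a ≤ q ^ n * Real.exp (a * (x / q) ^ (1 / a)) := by
  calc
    x ^ n / (n ! : ℝ) ^ a = q ^ n * ((x / q) ^ n / (n ! : ℝ) ^ a) := by
      rw [← mul_div_assoc, ← mul_pow, mul_div_cancel₀ x hq.ne']
    _ ≤ q ^ n * Real.exp (a * (x / q) ^ (1 / a)) := by
      gcongr
      exact pow_div_factorial_rpow_le_exp ha (by positivity) n

theorem summable_pow_div_factorial_rpow (ha : 0 < a) (x : ℝ) :
    Summable fun n : ℕ ↦ x ^ n / (n ! : ℝ) ^ a := by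
  refine Summable.of_norm_bounded
    (summable_geometric_two.mul_right (Real.exp (a * (|x| / (1 / 2)) ^ (1 / a)))) fun n ↦ ?_
  have hnorm : ‖x ^ n / (n ! : ℝ) ^ a‖ = |x| ^ n / (n ! : ℝ) ^ a := by
    rw [Real.norm_eq_abs, abs_div, abs_pow, abs_of_nonneg (by positivity : 0 ≤ (n ! : ℝ) ^ a)]
  exact hnorm.trans_le
    (pow_div_factorial_rpow_le_pow_mul_exp ha (abs_nonneg x) one_half_pos n)

theorem stmt_0_general (ha : 0 < a) (hx : 0 ≤ x) (hq₀ : 0 < q) (hq₁ : q < 1) :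
    ∑' n : ℕ, x ^ n / (n ! : ℝ) ^ a ≤ (1 - q)⁻¹ * Real.exp (a * (x / q) ^ (1 / a)) :=
  hasSum_le (pow_div_factorial_rpow_le_pow_mul_exp ha hx hq₀)
    (summable_pow_div_factorial_rpow ha x).hasSum
    ((hasSum_geometric_of_lt_one hq₀.le hq₁).mul_right _)

end

/-- For every real `a > 0` there exist constants `c₀ > 0` and `x₀ > 0` (depending only on `a`)
such that for all real `x ≥ x₀` one has `∑_{n=0}^∞ xⁿ/(n!)^a ≤ 2·exp(c₀·x^{1/a})`. -/
theorem stmt_0 (a : ℝ) (ha : 0 < a) :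
    ∃ c₀ : ℝ, 0 < c₀ ∧ ∃ x₀ : ℝ, 0 < x₀ ∧ ∀ x : ℝ, x₀ ≤ x →
      ∑' n : ℕ, x ^ n / (n ! : ℝ) ^ a ≤ 2 * Real.exp (c₀ * x ^ (1 / a)) := by
  refine ⟨a * 2 ^ (1 / a), by positivity, 1, one_pos, fun x hx ↦ ?_⟩
  have hx₀ : 0 ≤ x := zero_le_one.trans hx
  have hhalf : (1 - 1 / 2 : ℝ)⁻¹ = 2 := by norm_num
  have hdouble : a * (x / (1 / 2)) ^ (1 / a) = a * 2 ^ (1 / a) * x ^ (1 / a) := by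
    rw [div_div_eq_mul_div, div_one, mul_comm x, Real.mul_rpow zero_le_two hx₀, mul_assoc]
  simpa only [hhalf, hdouble] using stmt_0_general ha hx₀ one_half_pos one_half_lt_one
end

section
/- For every real h > -1 there exists a constant c₁ > 0 (depending only on h) such that for every integer n ≥ 1 and every t > 0, ∫_{{0 < t₁ < ⋯ < t_n < t}} (t - t_n)^h · ∏_{j=1}^{n-1} (t_{j+1} - t_j)^h dt₁⋯dt_n ≤ c₁ⁿ · t^{(1+h)n} / (n!)^{1+h}. -/
open MeasureTheory
open scoped Nat

/-!
With the extra factor `(t₁ - 0)^0` the integral is a Dirichlet integral, so it equals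
`t^{(1+h)n} Γ(1+h)^n / Γ((1+h)n+1)`: integrating out the largest variable leaves a Beta integral.
Restricting Euler's integral for `Γ(s+1)` to `x > s` gives `Γ(s+1) ≥ s^s e^{-s}`, and together
with `n! ≤ n^n` this bounds `(n!)^{1+h} / Γ((1+h)n+1)` by the `n`-th power of `(e/(1+h))^{1+h}`.
-/

section Gamma

lemma rpow_self_mul_exp_neg_le_Gamma_add_one {s : ℝ} (hs : 0 ≤ s) :
    s ^ s * Real.exp (-s) ≤ Real.Gamma (s + 1) := by
  have hint : IntegrableOn (fun x ↦ Real.exp (-x) * x ^ s) (Set.Ioi 0) := by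
    simpa only [add_sub_cancel_right] using
      Real.GammaIntegral_convergent (show 0 < s + 1 by linarith)
  calc s ^ s * Real.exp (-s)
      = ∫ x in Set.Ioi s, Real.exp (-x) * s ^ s := by
        rw [integral_mul_const, integral_exp_neg_Ioi, mul_comm]
    _ ≤ ∫ x in Set.Ioi s, Real.exp (-x) * x ^ s := by
        refine setIntegral_mono_on ((integrableOn_exp_neg_Ioi s).mul_const _)
          (hint.mono_set (Set.Ioi_subset_Ioi hs)) measurableSet_Ioi fun x hx ↦ ?_
        gcongr
        exact hx.le
    _ ≤ ∫ x in Set.Ioi 0, Real.exp (-x) * x ^ s := by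
        refine setIntegral_mono_set hint ?_ (Set.Ioi_subset_Ioi hs).eventuallyLE
        filter_upwards [self_mem_ae_restrict measurableSet_Ioi] with x hx
        exact mul_nonneg (Real.exp_nonneg _) (Real.rpow_nonneg hx.le _)
    _ = Real.Gamma (s + 1) := by
        rw [Real.Gamma_eq_integral (by linarith), add_sub_cancel_right]

lemma factorial_rpow_le_pow_mul_Gamma {a : ℝ} (ha : 0 < a) (n : ℕ) :
    (n ! : ℝ) ^ a ≤ ((Real.exp 1 / a) ^ a) ^ n * Real.Gamma (a * n + 1) := by
  have hpow : ((n : ℝ) ^ n) ^ a = ((Real.exp 1 / a) ^ a) ^ n *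
      ((a * n) ^ (a * n) * Real.exp (-(a * n))) := by
    rw [← Real.rpow_natCast, ← Real.rpow_mul (by positivity), mul_comm (n : ℝ) a,
      ← Real.rpow_mul_natCast (by positivity), Real.div_rpow (by positivity) ha.le,
      Real.mul_rpow ha.le (by positivity), Real.exp_one_rpow, Real.exp_neg]
    field_simp
  calc (n ! : ℝ) ^ a ≤ ((n : ℝ) ^ n) ^ a := by
        gcongr
        exact_mod_cast n.factorial_le_pow
    _ = _ := hpow
    _ ≤ _ := by
        gcongr
        exact rpow_self_mul_exp_neg_le_Gamma_add_one (by positivity)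

end Gamma

section Beta

open ProbabilityTheory

lemma setLIntegral_Ioo_rpow_mul_sub_rpow {a b t : ℝ} (ha : 0 < a) (hb : 0 < b) (ht : 0 < t) :
    ∫⁻ x in Set.Ioo 0 t, ENNReal.ofReal (x ^ (a - 1) * (t - x) ^ (b - 1)) =
      ENNReal.ofReal (t ^ (a + b - 1) * beta a b) := by
  have himage : (t * ·) '' Set.Ioo 0 1 = Set.Ioo 0 t := by
    simp [Set.image_mul_left_Ioo ht]
  have hbeta := beta_pos ha hb
  have hscale (u : ℝ) (hu : u ∈ Set.Ioo 0 1) :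
      t * ((t * u) ^ (a - 1) * (t - t * u) ^ (b - 1)) =
        t ^ (a + b - 1) * beta a b * (1 / beta a b * u ^ (a - 1) * (1 - u) ^ (b - 1)) := by
    have hpow : t ^ (a + b - 1) = t * t ^ (a - 1) * t ^ (b - 1) := by
      rw [← Real.rpow_one_add' ht.le (by linarith), ← Real.rpow_add ht]
      ring_nf
    rw [show t - t * u = t * (1 - u) by ring, Real.mul_rpow ht.le hu.1.le,
      Real.mul_rpow ht.le (sub_nonneg.2 hu.2.le), hpow]
    field_simp
  calc ∫⁻ x in Set.Ioo 0 t, ENNReal.ofReal (x ^ (a - 1) * (t - x) ^ (b - 1))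
      = ∫⁻ u in Set.Ioo 0 1, ENNReal.ofReal |t| *
          ENNReal.ofReal ((t * u) ^ (a - 1) * (t - t * u) ^ (b - 1)) := by
        rw [← himage, lintegral_image_eq_lintegral_abs_deriv_mul measurableSet_Ioo
          (fun u _ ↦ (hasDerivAt_const_mul t).hasDerivWithinAt)
          (mul_right_injective₀ ht.ne').injOn]
    _ = ∫⁻ u in Set.Ioo 0 1, ENNReal.ofReal (t ^ (a + b - 1) * beta a b) *
          ENNReal.ofReal (1 / beta a b * u ^ (a - 1) * (1 - u) ^ (b - 1)) := by
        refine setLIntegral_congr_fun measurableSet_Ioo fun u hu ↦ ?_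
        rw [← ENNReal.ofReal_mul (abs_nonneg t), ← ENNReal.ofReal_mul (by positivity),
          abs_of_pos ht, hscale u hu]
    _ = ENNReal.ofReal (t ^ (a + b - 1) * beta a b) := by
        rw [lintegral_const_mul' _ _ ENNReal.ofReal_ne_top, ← lintegral_betaPDF,
          lintegral_betaPDF_eq_one ha hb, mul_one]

end Beta

lemma lintegral_pi_fin_succ_eq_lintegral_snoc {E : Type*} [MeasureSpace E]
    [SigmaFinite (volume : Measure E)] {n : ℕ} {f : (Fin (n + 1) → E) → ENNReal}
    (hf : Measurable f) :
    ∫⁻ s, f s = ∫⁻ x : E, ∫⁻ s : Fin n → E, f (Fin.snoc (α := fun _ ↦ E) s x) := by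
  let e := MeasurableEquiv.piFinSuccAbove (fun _ : Fin (n + 1) ↦ E) (Fin.last n)
  have he : MeasurePreserving e.symm :=
    (volume_preserving_piFinSuccAbove (fun _ : Fin (n + 1) ↦ E) (Fin.last n)).symm
  have he_apply (x : E) (s : Fin n → E) : e.symm (x, s) = Fin.snoc (α := fun _ ↦ E) s x :=
    Fin.insertNth_last' x s
  have hfe : AEMeasurable (fun p ↦ f (e.symm p)) (volume.prod volume) :=
    (hf.comp e.symm.measurable).aemeasurable
  rw [← he.lintegral_comp hf, Measure.volume_eq_prod, lintegral_prod _ hfe]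
  simp only [he_apply]

section OrderedSimplex

variable {n : ℕ}

/-- The subdivision `(0, s₁, …, s_n, t)` attached to `s = (s₁, …, s_n)` and an endpoint `t`. -/
def nodes (s : Fin n → ℝ) (t : ℝ) : Fin (n + 2) → ℝ :=
  Fin.snoc (α := fun _ ↦ ℝ) (Fin.cons 0 s : Fin (n + 1) → ℝ) t

/-- The increments `s₁ - 0, s₂ - s₁, …, t - s_n` of the subdivision `(0, s₁, …, s_n, t)`. -/
def increment (s : Fin n → ℝ) (t : ℝ) (j : Fin (n + 1)) : ℝ :=
  nodes s t j.succ - nodes s t j.castSucc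

/-- The open simplex `{0 < s₁ < ⋯ < s_n < t}`. -/
def orderedSimplex (n : ℕ) (t : ℝ) : Set (Fin n → ℝ) :=
  {s | ∀ j, 0 < increment s t j}

lemma increment_fin_zero (s : Fin 0 → ℝ) (t : ℝ) (j : Fin 1) : increment s t j = t := by
  rw [Subsingleton.elim j 0]
  exact sub_zero t

lemma increment_snoc_last (s : Fin n → ℝ) (x t : ℝ) :
    increment (Fin.snoc (α := fun _ ↦ ℝ) s x) t (Fin.last (n + 1)) = t - x := by
  simp [increment, nodes, Fin.cons_snoc_eq_snoc_cons]

lemma increment_snoc_castSucc (s : Fin n → ℝ) (x t : ℝ) (j : Fin (n + 1)) :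
    increment (Fin.snoc (α := fun _ ↦ ℝ) s x) t j.castSucc = increment s x j := by
  simp only [increment, nodes, Fin.cons_snoc_eq_snoc_cons, Fin.succ_castSucc, Fin.snoc_castSucc]

lemma increment_zero (s : Fin (n + 1) → ℝ) (t : ℝ) : increment s t 0 = s 0 := by
  simp [increment, nodes, ← Fin.cons_snoc_eq_snoc_cons]

lemma increment_last (s : Fin (n + 1) → ℝ) (t : ℝ) :
    increment s t (Fin.last (n + 1)) = t - s (Fin.last n) := by
  rw [← Fin.snoc_init_self s, increment_snoc_last, Fin.snoc_last]

lemma increment_succ_castSucc (s : Fin (n + 1) → ℝ) (t : ℝ) (j : Fin n) :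
    increment s t j.castSucc.succ = s j.succ - s j.castSucc := by
  simp only [increment, nodes, Fin.succ_castSucc, Fin.snoc_castSucc, Fin.cons_succ]
  rw [← Fin.succ_castSucc, Fin.cons_succ]

lemma measurable_increment (t : ℝ) (j : Fin (n + 1)) :
    Measurable fun s : Fin n → ℝ ↦ increment s t j := by
  have hnodes : Continuous fun s : Fin n → ℝ ↦ nodes s t :=
    Continuous.finSnoc (A := fun _ ↦ ℝ) (.finCons (A := fun _ ↦ ℝ) continuous_const continuous_id)
      continuous_const
  unfold increment
  fun_prop

lemma sum_increment (s : Fin n → ℝ) (t : ℝ) : ∑ j, increment s t j = t := by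
  induction n generalizing t with
  | zero => simp [increment_fin_zero]
  | succ n ih =>
    rw [← Fin.snoc_init_self s, Fin.sum_univ_castSucc, increment_snoc_last]
    simp only [increment_snoc_castSucc, ih, add_sub_cancel]

lemma pos_of_mem_orderedSimplex {s : Fin n → ℝ} {t : ℝ} (hs : s ∈ orderedSimplex n t) : 0 < t := by
  rw [← sum_increment s t]
  exact Finset.sum_pos (fun j _ ↦ hs j) Finset.univ_nonempty

lemma measurableSet_orderedSimplex (n : ℕ) (t : ℝ) : MeasurableSet (orderedSimplex n t) := by
  simp only [orderedSimplex, Set.ofPred_forall]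
  exact .iInter fun j ↦ measurableSet_lt measurable_const (measurable_increment t j)

lemma snoc_mem_orderedSimplex_iff {s : Fin n → ℝ} {x t : ℝ} :
    Fin.snoc (α := fun _ ↦ ℝ) s x ∈ orderedSimplex (n + 1) t ↔
      x ∈ Set.Ioo 0 t ∧ s ∈ orderedSimplex n x := by
  have hmem : Fin.snoc (α := fun _ ↦ ℝ) s x ∈ orderedSimplex (n + 1) t ↔
      s ∈ orderedSimplex n x ∧ x < t := by
    simp only [orderedSimplex, Set.mem_ofPred_eq, Fin.forall_fin_succ', increment_snoc_castSucc,
      increment_snoc_last, sub_pos]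
  rw [hmem]
  exact ⟨fun ⟨hs, hx⟩ ↦ ⟨⟨pos_of_mem_orderedSimplex hs, hx⟩, hs⟩, fun ⟨hx, hs⟩ ↦ ⟨hs, hx.2⟩⟩

lemma mem_orderedSimplex_succ_iff {s : Fin (n + 1) → ℝ} {t : ℝ} :
    s ∈ orderedSimplex (n + 1) t ↔ StrictMono s ∧ 0 < s 0 ∧ s (Fin.last n) < t := by
  simp only [orderedSimplex, Set.mem_ofPred_eq, Fin.forall_fin_succ (n := n + 1),
    Fin.forall_fin_succ' (n := n), increment_zero, increment_succ_castSucc, Fin.succ_last,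
    increment_last, sub_pos, Fin.strictMono_iff_lt_succ]
  tauto

lemma setLIntegral_orderedSimplex_succ (t : ℝ) {f : (Fin (n + 1) → ℝ) → ENNReal}
    (hf : Measurable f) :
    ∫⁻ s in orderedSimplex (n + 1) t, f s =
      ∫⁻ x in Set.Ioo 0 t, ∫⁻ s in orderedSimplex n x, f (Fin.snoc (α := fun _ ↦ ℝ) s x) := by
  rw [← lintegral_indicator (measurableSet_orderedSimplex _ _),
    lintegral_pi_fin_succ_eq_lintegral_snoc (hf.indicator (measurableSet_orderedSimplex _ _)),
    ← lintegral_indicator measurableSet_Ioo]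
  refine lintegral_congr fun x ↦ ?_
  classical
  by_cases hx : x ∈ Set.Ioo 0 t
  · rw [Set.indicator_of_mem hx, ← lintegral_indicator (measurableSet_orderedSimplex _ _)]
    simp only [Set.indicator_apply, snoc_mem_orderedSimplex_iff, hx, true_and]
  · simp only [Set.indicator_apply, snoc_mem_orderedSimplex_iff, hx, false_and, if_false,
      lintegral_zero]

end OrderedSimplex

section Dirichlet

variable {n : ℕ}

lemma prod_increment_snoc_rpow (s : Fin n → ℝ) (x t : ℝ) (α : Fin (n + 2) → ℝ) :
    ∏ j, increment (Fin.snoc (α := fun _ ↦ ℝ) s x) t j ^ (α j - 1) =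
      (t - x) ^ (α (Fin.last (n + 1)) - 1) * ∏ j, increment s x j ^ (α j.castSucc - 1) := by
  simp only [Fin.prod_univ_castSucc (n := n + 1), increment_snoc_castSucc, increment_snoc_last,
    mul_comm]

lemma setLIntegral_prod_increment_snoc_rpow {x t : ℝ} (hx : x ≤ t)
    (α : Fin (n + 2) → ℝ) (S : Set (Fin n → ℝ)) :
    ∫⁻ s in S, ENNReal.ofReal
        (∏ j, increment (Fin.snoc (α := fun _ ↦ ℝ) s x) t j ^ (α j - 1)) =
      ENNReal.ofReal ((t - x) ^ (α (Fin.last (n + 1)) - 1)) *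
        ∫⁻ s in S, ENNReal.ofReal (∏ j, increment s x j ^ (α j.castSucc - 1)) := by
  simp only [prod_increment_snoc_rpow, ENNReal.ofReal_mul (Real.rpow_nonneg (sub_nonneg.2 hx) _)]
  exact lintegral_const_mul' _ _ ENNReal.ofReal_ne_top

lemma measurable_ofReal_prod_increment_rpow (t : ℝ) (α : Fin (n + 1) → ℝ) :
    Measurable fun s : Fin n → ℝ ↦ ENNReal.ofReal (∏ j, increment s t j ^ (α j - 1)) :=
  (Finset.measurable_prod _ fun j _ ↦ (measurable_increment t j).pow_const _).ennreal_ofReal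

lemma beta_mul_prod_Gamma_div_Gamma_sum {α : Fin (n + 2) → ℝ}
    (hα : ∀ j : Fin (n + 1), 0 < α j.castSucc) :
    ProbabilityTheory.beta (∑ j : Fin (n + 1), α j.castSucc) (α (Fin.last (n + 1))) *
        ((∏ j : Fin (n + 1), Real.Gamma (α j.castSucc)) /
          Real.Gamma (∑ j : Fin (n + 1), α j.castSucc)) =
      (∏ j, Real.Gamma (α j)) / Real.Gamma (∑ j, α j) := by
  have hΓ : Real.Gamma (∑ j : Fin (n + 1), α j.castSucc) ≠ 0 :=
    (Real.Gamma_pos_of_pos (Finset.sum_pos (fun j _ ↦ hα _) Finset.univ_nonempty)).ne'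
  rw [ProbabilityTheory.beta, Fin.prod_univ_castSucc (n := n + 1),
    Fin.sum_univ_castSucc (n := n + 1)]
  field_simp

lemma setLIntegral_orderedSimplex_prod_increment_rpow {α : Fin (n + 1) → ℝ}
    (hα : ∀ j, 0 < α j) {t : ℝ} (ht : 0 < t) :
    ∫⁻ s in orderedSimplex n t, ENNReal.ofReal (∏ j, increment s t j ^ (α j - 1)) =
      ENNReal.ofReal
        (t ^ (∑ j, α j - 1) * ((∏ j, Real.Gamma (α j)) / Real.Gamma (∑ j, α j))) := by
  induction n generalizing t with
  | zero =>
    have hΓ := (Real.Gamma_pos_of_pos (hα 0)).ne'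
    simp [orderedSimplex, increment_fin_zero, ht, hΓ, volume_pi]
  | succ n ih =>
    set A := ∑ j : Fin (n + 1), α j.castSucc with hA
    set b := α (Fin.last (n + 1)) with hb
    set C := (∏ j : Fin (n + 1), Real.Gamma (α j.castSucc)) / Real.Gamma A with hC
    have hA_pos : 0 < A := Finset.sum_pos (fun j _ ↦ hα _) Finset.univ_nonempty
    have hC_nonneg : 0 ≤ C :=
      div_nonneg (Finset.prod_nonneg fun j _ ↦ (Real.Gamma_pos_of_pos (hα _)).le)
        (Real.Gamma_pos_of_pos hA_pos).le
    have hinner (x : ℝ) (hx : x ∈ Set.Ioo 0 t) :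
        ∫⁻ s in orderedSimplex n x, ENNReal.ofReal
            (∏ j, increment (Fin.snoc (α := fun _ ↦ ℝ) s x) t j ^ (α j - 1)) =
          ENNReal.ofReal C * ENNReal.ofReal (x ^ (A - 1) * (t - x) ^ (b - 1)) := by
      rw [setLIntegral_prod_increment_snoc_rpow hx.2.le, ih (fun j ↦ hα j.castSucc) hx.1,
        ← ENNReal.ofReal_mul (Real.rpow_nonneg (sub_nonneg.2 hx.2.le) _),
        ← ENNReal.ofReal_mul hC_nonneg]
      congr 1
      ring
    calc _ = ∫⁻ x in Set.Ioo 0 t, ENNReal.ofReal C *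
          ENNReal.ofReal (x ^ (A - 1) * (t - x) ^ (b - 1)) := by
          rw [setLIntegral_orderedSimplex_succ t (measurable_ofReal_prod_increment_rpow t α)]
          exact setLIntegral_congr_fun measurableSet_Ioo hinner
      _ = ENNReal.ofReal (C * (t ^ (A + b - 1) * ProbabilityTheory.beta A b)) := by
          rw [lintegral_const_mul' _ _ ENNReal.ofReal_ne_top,
            setLIntegral_Ioo_rpow_mul_sub_rpow hA_pos (hα _) ht, ENNReal.ofReal_mul hC_nonneg]
      _ = _ := by
          rw [← beta_mul_prod_Gamma_div_Gamma_sum fun j ↦ hα j.castSucc, Fin.sum_univ_castSucc,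
            ← hA, ← hb, ← hC]
          congr 1
          ring

lemma setLIntegral_orderedSimplex_prod_increment_succ_rpow {h t : ℝ} (hh : -1 < h) (ht : 0 < t) :
    ∫⁻ s in orderedSimplex n t, ENNReal.ofReal (∏ j : Fin n, increment s t j.succ ^ h) =
      ENNReal.ofReal
        (t ^ ((1 + h) * n) * (Real.Gamma (1 + h) ^ n / Real.Gamma ((1 + h) * n + 1))) := by
  have hα : ∀ j, 0 < (Fin.cons 1 fun _ ↦ 1 + h : Fin (n + 1) → ℝ) j :=
    Fin.cases one_pos fun _ ↦ by simpa using neg_lt_iff_pos_add'.1 hh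
  simpa [Fin.prod_univ_succ, Fin.sum_univ_succ, mul_add, mul_comm _ (n : ℝ), add_comm _ (1 : ℝ)]
    using setLIntegral_orderedSimplex_prod_increment_rpow hα ht

end Dirichlet

lemma setLIntegral_orderedSimplex_prod_increment_succ_rpow_le {h t : ℝ} (hh : -1 < h) (ht : 0 < t)
    (n : ℕ) :
    ∫⁻ s in orderedSimplex n t, ENNReal.ofReal (∏ j : Fin n, increment s t j.succ ^ h) ≤
      ENNReal.ofReal ((Real.Gamma (1 + h) * (Real.exp 1 / (1 + h)) ^ (1 + h)) ^ n *
        t ^ ((1 + h) * n) / (n ! : ℝ) ^ (1 + h)) := by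
  have ha : 0 < 1 + h := by linarith
  have hΓn : 0 < Real.Gamma ((1 + h) * n + 1) := Real.Gamma_pos_of_pos (by positivity)
  rw [setLIntegral_orderedSimplex_prod_increment_succ_rpow hh ht]
  refine ENNReal.ofReal_le_ofReal ?_
  rw [← mul_div_assoc, div_le_div_iff₀ hΓn (by positivity)]
  calc t ^ ((1 + h) * n) * Real.Gamma (1 + h) ^ n * (n ! : ℝ) ^ (1 + h)
      ≤ t ^ ((1 + h) * n) * Real.Gamma (1 + h) ^ n *
          (((Real.exp 1 / (1 + h)) ^ (1 + h)) ^ n * Real.Gamma ((1 + h) * n + 1)) := by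
        gcongr
        exact factorial_rpow_le_pow_mul_Gamma ha n
    _ = _ := by ring

/-- For every real `h > -1` there is a constant `c₁ > 0` (depending only on `h`) such that for
every integer `n ≥ 1` and every `t > 0`, the integral over the simplex `{0 < t₁ < ⋯ < t_n < t}`
of `(t - t_n)^h · ∏_{j=1}^{n-1} (t_{j+1} - t_j)^h` is at most `c₁ⁿ · t^{(1+h)n} / (n!)^{1+h}`. -/
theorem stmt_2 (h : ℝ) (hh : -1 < h) :
    ∃ c₁ : ℝ, 0 < c₁ ∧ ∀ n : ℕ, ∀ hn : 1 ≤ n, ∀ t : ℝ, 0 < t →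
      (∫⁻ s in {s : Fin n → ℝ | StrictMono s ∧ 0 < s ⟨0, by omega⟩ ∧ s ⟨n - 1, by omega⟩ < t},
          ENNReal.ofReal ((t - s ⟨n - 1, by omega⟩) ^ h *
            ∏ j : Fin (n - 1),
              (s ⟨(j : ℕ) + 1, by have := j.isLt; omega⟩ -
                s ⟨(j : ℕ), by have := j.isLt; omega⟩) ^ h)) ≤
        ENNReal.ofReal (c₁ ^ n * t ^ ((1 + h) * n) / (n ! : ℝ) ^ (1 + h)) := by
  have ha : 0 < 1 + h := by linarith
  refine ⟨Real.Gamma (1 + h) * (Real.exp 1 / (1 + h)) ^ (1 + h),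
    mul_pos (Real.Gamma_pos_of_pos ha) (by positivity), fun n hn t ht ↦ ?_⟩
  obtain ⟨n, rfl⟩ := Nat.exists_eq_add_of_le' hn
  refine le_of_eq_of_le ?_ (setLIntegral_orderedSimplex_prod_increment_succ_rpow_le hh ht (n + 1))
  congr! 3 with s
  · exact Set.ext fun s ↦ mem_orderedSimplex_succ_iff.symm
  · rw [Fin.prod_univ_castSucc, mul_comm, Fin.succ_last, increment_last]
    simp only [increment_succ_castSucc]
    rfl
end

section
/- Let d ≥ 1, let α₁, …, α_d ∈ (0,1), set a = ∑_{j=1}^{d} α_j, and let μ_α be the measure on ℝ^d with density ∏_{j=1}^{d} |ξ_j|^{α_j - 1} with respect to Lebesgue measure. Let S = sup_{θ ∈ ℝ^d} ∫_{ℝ^d} (1 + |ξ - θ|²)^{-1} μ_α(dξ) and assume S < ∞. Then for every t > 0 and every η ∈ ℝ^d, ∫_{ℝ^d} sin²(t|ξ|)/|ξ|² · ∏_{j=1}^{d} |ξ_j - η_j|^{α_j - 1} dξ ≤ 4·t^{2-a}·S, where sin²(t|ξ|)/|ξ|² is interpreted as t² when ξ = 0. -/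
open MeasureTheory
open scoped ENNReal Classical

/-!
After the substitution `x = t (ξ - η)`, homogeneity of the weight turns the left-hand side into
`t ^ (2 - a)` times the integral of `sinc² |x + t η|` against `μ_α`. Since `sinc² y ≤ 2 / (1 + y²)`,
this is at most `2 t ^ (2 - a)` times the integral defining `S` at the single point `θ = -t η`.
-/

lemma mul_sinc (x : ℝ) : x * Real.sinc x = Real.sin x := by
  rcases eq_or_ne x 0 with rfl | hx
  · simp
  · rw [Real.sinc_of_ne_zero hx, mul_div_cancel₀ _ hx]

lemma sinc_sq_le (x : ℝ) : Real.sinc x ^ 2 ≤ 2 * (1 + x ^ 2)⁻¹ := by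
  have sinc_sq_le_one : Real.sinc x ^ 2 ≤ 1 :=
    (sq_le_one_iff_abs_le_one _).2 (Real.abs_sinc_le_one x)
  have sq_mul_sinc_sq_le_one : x ^ 2 * Real.sinc x ^ 2 ≤ 1 := by
    rw [← mul_pow, mul_sinc]
    exact Real.sin_sq_le_one x
  rw [← div_eq_mul_inv, le_div_iff₀ (by positivity)]
  linarith

lemma ite_sin_sq_div_norm_sq {E : Type*} [NormedAddCommGroup E] (t : ℝ) (ξ : E)
    [Decidable (ξ = 0)] :
    (if ξ = 0 then t ^ 2 else Real.sin (t * ‖ξ‖) ^ 2 / ‖ξ‖ ^ 2) =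
      t ^ 2 * Real.sinc (t * ‖ξ‖) ^ 2 := by
  split_ifs with hξ
  · simp [hξ]
  · have hnorm : ‖ξ‖ ≠ 0 := norm_ne_zero_iff.2 hξ
    rw [← mul_sinc]
    field_simp

lemma prod_abs_mul_rpow {ι : Type*} (s : Finset ι) (β x : ι → ℝ) {t : ℝ} (ht : 0 < t) :
    ∏ j ∈ s, |t * x j| ^ β j = t ^ (∑ j ∈ s, β j) * ∏ j ∈ s, |x j| ^ β j := by
  simp_rw [abs_mul, abs_of_pos ht, Real.mul_rpow ht.le (abs_nonneg _)]
  rw [Finset.prod_mul_distrib, Real.rpow_sum_of_pos ht]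

section Scaling

variable {E : Type*} [NormedAddCommGroup E] [NormedSpace ℝ E] [FiniteDimensional ℝ E]
  [MeasurableSpace E] [BorelSpace E] (μ : Measure E) [μ.IsAddHaarMeasure]

lemma lintegral_comp_smul (f : E → ℝ≥0∞) {t : ℝ} (ht : t ≠ 0) :
    ∫⁻ x, f (t • x) ∂μ = ENNReal.ofReal |(t ^ Module.finrank ℝ E)⁻¹| * ∫⁻ x, f x ∂μ := by
  rw [← smul_eq_mul, ← lintegral_smul_measure, ← Measure.map_addHaar_smul μ ht]
  exact (lintegral_map_equiv f (MeasurableEquiv.smul₀ t ht)).symm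

variable {w : E → ℝ≥0∞} {t κ : ℝ}

lemma lintegral_comp_sub_mul_comp_smul (ht : 0 < t)
    (hw : ∀ x, w (t • x) = ENNReal.ofReal (t ^ κ) * w x) (f : E → ℝ≥0∞) (η : E) :
    ∫⁻ ξ, w (ξ - η) * f (t • ξ) ∂μ =
      ENNReal.ofReal (t ^ (-(κ + Module.finrank ℝ E))) * ∫⁻ x, w x * f (x + t • η) ∂μ := by
  have hw_inv (x : E) : w x = ENNReal.ofReal (t ^ (-κ)) * w (t • x) := by
    rw [hw, ← mul_assoc, ← ENNReal.ofReal_mul (by positivity), ← Real.rpow_add ht]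
    simp
  calc ∫⁻ ξ, w (ξ - η) * f (t • ξ) ∂μ
      = ∫⁻ x, w x * f (t • x + t • η) ∂μ := by
        rw [← lintegral_add_right_eq_self _ η]
        simp only [add_sub_cancel_right, smul_add]
    _ = ENNReal.ofReal (t ^ (-κ)) * ∫⁻ x, w (t • x) * f (t • x + t • η) ∂μ := by
        rw [← lintegral_const_mul' _ _ ENNReal.ofReal_ne_top]
        simp_rw [← mul_assoc, ← hw_inv]
    _ = ENNReal.ofReal (t ^ (-(κ + Module.finrank ℝ E))) * ∫⁻ x, w x * f (x + t • η) ∂μ := by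
        rw [lintegral_comp_smul μ (fun x => w x * f (x + t • η)) ht.ne', ← mul_assoc,
          ← ENNReal.ofReal_mul (by positivity), abs_of_pos (by positivity), neg_add,
          Real.rpow_add ht, Real.rpow_neg ht.le (Module.finrank ℝ E : ℝ), Real.rpow_natCast]

theorem lintegral_comp_sub_mul_sinc_sq_le (ht : 0 < t)
    (hw : ∀ x, w (t • x) = ENNReal.ofReal (t ^ κ) * w x) (η : E) :
    ∫⁻ ξ, w (ξ - η) * ENNReal.ofReal (t ^ 2 * Real.sinc (t * ‖ξ‖) ^ 2) ∂μ ≤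
      ENNReal.ofReal (2 * t ^ (2 - (κ + Module.finrank ℝ E))) *
        ∫⁻ x, w x * ENNReal.ofReal ((1 + ‖x + t • η‖ ^ 2)⁻¹) ∂μ := by
  have hconst : t ^ (-(κ + Module.finrank ℝ E)) * (2 * t ^ 2) =
      2 * t ^ (2 - (κ + Module.finrank ℝ E)) := by
    rw [sub_eq_neg_add, Real.rpow_add ht, Real.rpow_two]
    ring
  have hmultiplier (x : E) : ENNReal.ofReal (t ^ 2 * Real.sinc ‖x‖ ^ 2) ≤
      ENNReal.ofReal (2 * t ^ 2) * ENNReal.ofReal ((1 + ‖x‖ ^ 2)⁻¹) := by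
    rw [← ENNReal.ofReal_mul (by positivity), mul_comm 2, mul_assoc]
    gcongr
    exact sinc_sq_le ‖x‖
  calc ∫⁻ ξ, w (ξ - η) * ENNReal.ofReal (t ^ 2 * Real.sinc (t * ‖ξ‖) ^ 2) ∂μ
      = ∫⁻ ξ, w (ξ - η) * ENNReal.ofReal (t ^ 2 * Real.sinc ‖t • ξ‖ ^ 2) ∂μ := by
        simp_rw [norm_smul, Real.norm_of_nonneg ht.le]
    _ = ENNReal.ofReal (t ^ (-(κ + Module.finrank ℝ E))) *
          ∫⁻ x, w x * ENNReal.ofReal (t ^ 2 * Real.sinc ‖x + t • η‖ ^ 2) ∂μ :=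
        lintegral_comp_sub_mul_comp_smul μ ht hw
          (fun x => ENNReal.ofReal (t ^ 2 * Real.sinc ‖x‖ ^ 2)) η
    _ ≤ ENNReal.ofReal (t ^ (-(κ + Module.finrank ℝ E))) *
          ∫⁻ x, ENNReal.ofReal (2 * t ^ 2) *
            (w x * ENNReal.ofReal ((1 + ‖x + t • η‖ ^ 2)⁻¹)) ∂μ := by
        simp_rw [mul_left_comm (ENNReal.ofReal (2 * t ^ 2))]
        gcongr
        exact hmultiplier _
    _ = ENNReal.ofReal (2 * t ^ (2 - (κ + Module.finrank ℝ E))) *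
          ∫⁻ x, w x * ENNReal.ofReal ((1 + ‖x + t • η‖ ^ 2)⁻¹) ∂μ := by
        rw [lintegral_const_mul' _ _ ENNReal.ofReal_ne_top, ← mul_assoc,
          ← ENNReal.ofReal_mul (by positivity), hconst]

end Scaling

theorem stmt_9_general {ι : Type*} [Fintype ι] (α : ι → ℝ) {t : ℝ} (ht : 0 < t)
    (η : EuclideanSpace ℝ ι) :
    (∫⁻ ξ : EuclideanSpace ℝ ι,
        ENNReal.ofReal ((if ξ = 0 then t ^ 2 else Real.sin (t * ‖ξ‖) ^ 2 / ‖ξ‖ ^ 2) *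
          ∏ j, |ξ j - η j| ^ (α j - 1))) ≤
      ENNReal.ofReal (2 * t ^ (2 - ∑ j, α j)) *
        ∫⁻ ξ, ENNReal.ofReal ((1 + ‖ξ + t • η‖ ^ 2)⁻¹)
          ∂volume.withDensity fun ξ : EuclideanSpace ℝ ι =>
            ENNReal.ofReal (∏ j, |ξ j| ^ (α j - 1)) := by
  let w : EuclideanSpace ℝ ι → ℝ≥0∞ := fun x => ENNReal.ofReal (∏ j, |x j| ^ (α j - 1))
  have hw (x) : w (t • x) = ENNReal.ofReal (t ^ ∑ j, (α j - 1)) * w x := by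
    simp only [w, PiLp.smul_apply, smul_eq_mul]
    rw [prod_abs_mul_rpow _ _ _ ht, ENNReal.ofReal_mul (by positivity)]
  have hdegree : ∑ j, (α j - 1) + Module.finrank ℝ (EuclideanSpace ℝ ι) = ∑ j, α j := by simp
  calc _ = ∫⁻ ξ, w (ξ - η) * ENNReal.ofReal (t ^ 2 * Real.sinc (t * ‖ξ‖) ^ 2) := by
        refine lintegral_congr fun ξ => ?_
        rw [ite_sin_sq_div_norm_sq, ENNReal.ofReal_mul (by positivity), mul_comm]
        rfl
    _ ≤ ENNReal.ofReal (2 * t ^ (2 - ∑ j, α j)) *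
          ∫⁻ x, w x * ENNReal.ofReal ((1 + ‖x + t • η‖ ^ 2)⁻¹) := by
        rw [← hdegree]
        exact lintegral_comp_sub_mul_sinc_sq_le volume ht hw η
    _ = _ := by
        rw [lintegral_withDensity_eq_lintegral_mul _ (by fun_prop) (by fun_prop)]
        rfl

/-- Let `μ_α` be the measure on `ℝ^d` with density `∏_j |ξ_j|^{α_j-1}` (all `α_j ∈ (0,1)`),
`a = ∑_j α_j`, and `S = sup_θ ∫ (1+|ξ-θ|²)⁻¹ μ_α(dξ) < ∞`. Then for every `t > 0` and `η ∈ ℝ^d`,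
`∫ sin²(t|ξ|)/|ξ|² ∏_j |ξ_j-η_j|^{α_j-1} dξ ≤ 4 t^{2-a} S`, the quotient being `t²` at `ξ = 0`. -/
theorem stmt_9 (d : ℕ) (hd : 1 ≤ d) (α : Fin d → ℝ) (hα : ∀ j, α j ∈ Set.Ioo (0 : ℝ) 1)
    (a : ℝ) (ha : a = ∑ j, α j)
    (μα : Measure (EuclideanSpace ℝ (Fin d)))
    (hμα : μα = volume.withDensity fun ξ => ENNReal.ofReal (∏ j, |ξ j| ^ (α j - 1)))
    (S : ℝ≥0∞)
    (hS : S = ⨆ θ : EuclideanSpace ℝ (Fin d),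
      ∫⁻ ξ, ENNReal.ofReal ((1 + ‖ξ - θ‖ ^ 2)⁻¹) ∂μα)
    (hSfin : S ≠ ⊤)
    (t : ℝ) (ht : 0 < t) (η : EuclideanSpace ℝ (Fin d)) :
    (∫⁻ ξ : EuclideanSpace ℝ (Fin d),
        ENNReal.ofReal ((if ξ = 0 then t ^ 2 else Real.sin (t * ‖ξ‖) ^ 2 / ‖ξ‖ ^ 2) *
          ∏ j, |ξ j - η j| ^ (α j - 1))) ≤
      ENNReal.ofReal (4 * t ^ (2 - a)) * S := by
  subst ha hμα hS
  refine (stmt_9_general α ht η).trans (mul_le_mul' (by gcongr; norm_num) ?_)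
  exact le_iSup_of_le (-(t • η)) (by simp only [sub_neg_eq_add, le_refl])
end

section
/- Let H ∈ (1/2, 1), set α_H = H(2H-1), and let a ∈ [0,2). For t > 0 and 𝐭 = (t₁,…,t_n) ∈ [0,t]ⁿ, let t_{(1)} ≤ ⋯ ≤ t_{(n)} be the nondecreasing rearrangement of t₁,…,t_n, set t_{(n+1)} = t, and define β(𝐭) = ∏_{j=1}^{n} (t_{(j+1)} - t_{(j)}). Then there exists a constant c > 0 (depending only on H and a) such that for every integer n ≥ 1 and every t > 0, α_Hⁿ · ∫_{[0,t]^{2n}} ∏_{j=1}^{n} |t_j - s_j|^{2H-2} · (β(𝐭)·β(𝐬))^{(2-a)/2} d𝐭 d𝐬 ≤ cⁿ · t^{(2H+2-a)n} / (n!)^{2-a}. -/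
open MeasureTheory
open scoped Nat

/-- For `v = (v₁,…,v_n) ∈ [0,t]ⁿ`, `gapProd t v = ∏_{j=1}^{n} (v_{(j+1)} - v_{(j)})`, where
`v_{(1)} ≤ ⋯ ≤ v_{(n)}` is the nondecreasing rearrangement of `v` and `v_{(n+1)} = t`. -/
noncomputable def gapProd {n : ℕ} (t : ℝ) (v : Fin n → ℝ) : ℝ :=
  let w : Fin (n + 1) → ℝ := Fin.snoc (v ∘ Tuple.sort v) t
  ∏ j : Fin n, (w j.succ - w j.castSucc)

/-!
The gaps `v_{(j+1)} - v_{(j)}` are nonnegative and telescope to at most `t`, so the inequality of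
arithmetic and geometric means gives `gapProd t v ≤ (t / n) ^ n ≤ t ^ n / n !` uniformly on the
cube. What remains is the integral of the kernel `∏ |t_j - s_j| ^ (2H - 2)`, which by Tonelli is
the `n`-th power of
`∫₀ᵗ ∫₀ᵗ |u - s| ^ (2H - 2) ds du = t ^ (2H) / (H (2H - 1))`.
The prefactor `α_H` cancels this denominator, so `c = 1` works.
-/

section Tonelli

variable {ι : Type*} [Fintype ι]

theorem lintegral_pi_prod_eq_prod_lintegral {E : ι → Type*} [∀ i, MeasurableSpace (E i)]
    {μ : ∀ i, Measure (E i)} [∀ i, SigmaFinite (μ i)] {f : ∀ i, E i → ENNReal}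
    (hf : ∀ i, Measurable (f i)) :
    ∫⁻ x, ∏ i, f i (x i) ∂(Measure.pi μ) = ∏ i, ∫⁻ x, f i x ∂(μ i) := by
  classical
  have hmeas (s : Finset ι) : Measurable fun x : ∀ i, E i => ∏ i ∈ s, f i (x i) := by fun_prop
  have hmarginal (s : Finset ι) (x : ∀ i, E i) :
      lmarginal μ s (fun y => ∏ i ∈ s, f i (y i)) x = ∏ i ∈ s, ∫⁻ y, f i y ∂(μ i) := by
    induction s using Finset.induction_on with
    | empty => simp
    | insert i s hi ih =>
      have hinner (y : ∀ i, E i) :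
          ∫⁻ z, ∏ j ∈ insert i s, f j (Function.update y i z j) ∂(μ i) =
            (∫⁻ z, f i z ∂(μ i)) * ∏ j ∈ s, f j (y j) := by
        rw [← lintegral_mul_const _ (hf i)]
        refine lintegral_congr fun z => ?_
        rw [Finset.prod_insert hi, Function.update_self]
        congr 1
        refine Finset.prod_congr rfl fun j hj => ?_
        rw [Function.update_of_ne (ne_of_mem_of_not_mem hj hi)]
      rw [lmarginal_insert' _ (hmeas _) hi, Finset.prod_insert hi, ← ih]
      simp only [hinner]
      exact lintegral_const_mul _ ((hmeas s).comp measurable_updateFinset)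
  rcases isEmpty_or_nonempty (∀ i, E i) with hE | ⟨⟨x⟩⟩
  · obtain ⟨i, hi⟩ := isEmpty_pi.1 hE
    rw [lintegral_of_isEmpty, Finset.prod_eq_zero (Finset.mem_univ i) (lintegral_of_isEmpty _ _)]
  · rw [lintegral_eq_lmarginal_univ x, hmarginal]

theorem lintegral_pi_prod_pi_prod_eq_prod_lintegral {α β : Type*} [MeasurableSpace α]
    [MeasurableSpace β] {μ : ι → Measure α} {ν : ι → Measure β} [∀ i, SigmaFinite (μ i)]
    [∀ i, SigmaFinite (ν i)] {f : ι → α × β → ENNReal} (hf : ∀ i, Measurable (f i)) :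
    ∫⁻ p, ∏ i, f i (p.1 i, p.2 i) ∂((Measure.pi μ).prod (Measure.pi ν)) =
      ∏ i, ∫⁻ q, f i q ∂((μ i).prod (ν i)) := by
  rw [← lintegral_pi_prod_eq_prod_lintegral hf,
    ← (measurePreserving_arrowProdEquivProdArrow α β ι μ ν).lintegral_comp (by fun_prop)]
  rfl

end Tonelli

section Kernel

theorem setLIntegral_Icc_comp_const_sub (g : ℝ → ENNReal) (a b c : ℝ) :
    ∫⁻ x in Set.Icc a b, g (c - x) = ∫⁻ x in Set.Icc (c - b) (c - a), g x := by
  rw [← (Measure.measurePreserving_sub_left volume c).setLIntegral_comp_preimage_emb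
    (MeasurableEquiv.subLeft c).measurableEmbedding g]
  simp only [Set.preimage_const_sub_Icc, sub_sub_cancel]

theorem setLIntegral_Icc_comp_sub_const (g : ℝ → ENNReal) (a b c : ℝ) :
    ∫⁻ x in Set.Icc a b, g (x - c) = ∫⁻ x in Set.Icc (a - c) (b - c), g x := by
  rw [← (measurePreserving_sub_right volume c).setLIntegral_comp_preimage_emb
    (MeasurableEquiv.subRight c).measurableEmbedding g]
  simp only [Set.preimage_sub_const_Icc, sub_add_cancel]

theorem setLIntegral_Icc_comp_abs_sub (g : ℝ → ENNReal) {a b u : ℝ} (hu : u ∈ Set.Icc a b) :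
    ∫⁻ s in Set.Icc a b, g |u - s| =
      (∫⁻ x in Set.Icc 0 (u - a), g x) + ∫⁻ x in Set.Icc 0 (b - u), g x := by
  have hleft : ∫⁻ s in Set.Icc a u, g |u - s| = ∫⁻ x in Set.Icc 0 (u - a), g x := by
    rw [setLIntegral_congr_fun measurableSet_Icc (g := fun s => g (u - s)) fun s hs => by
      simp only [abs_of_nonneg (sub_nonneg.2 hs.2)]]
    rw [setLIntegral_Icc_comp_const_sub, sub_self]
  have hright : ∫⁻ s in Set.Icc u b, g |u - s| = ∫⁻ x in Set.Icc 0 (b - u), g x := by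
    rw [setLIntegral_congr_fun measurableSet_Icc (g := fun s => g (s - u)) fun s hs => by
      simp only [abs_sub_comm u, abs_of_nonneg (sub_nonneg.2 hs.1)]]
    rw [setLIntegral_Icc_comp_sub_const, sub_self]
  rw [← Set.Icc_union_Ioc_eq_Icc hu.1 hu.2, lintegral_union measurableSet_Ioc
    (Set.disjoint_left.2 fun s hs hs' => hs'.1.not_ge hs.2), restrict_Ioc_eq_restrict_Icc,
    hleft, hright]

variable {r : ℝ}

theorem setLIntegral_Icc_rpow {t : ℝ} (hr : -1 < r) (ht : 0 ≤ t) :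
    ∫⁻ x in Set.Icc 0 t, ENNReal.ofReal (x ^ r) = ENNReal.ofReal (t ^ (r + 1) / (r + 1)) := by
  have hint : IntegrableOn (fun x : ℝ => x ^ r) (Set.Icc 0 t) :=
    (intervalIntegrable_iff_integrableOn_Icc_of_le ht).1
      (intervalIntegral.intervalIntegrable_rpow' hr)
  rw [← ofReal_integral_eq_lintegral_ofReal hint
    (ae_restrict_of_forall_mem measurableSet_Icc fun x hx => Real.rpow_nonneg hx.1 r),
    integral_Icc_eq_integral_Ioc, ← intervalIntegral.integral_of_le ht, integral_rpow (Or.inl hr),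
    Real.zero_rpow (by linarith), sub_zero]

theorem setLIntegral_setLIntegral_abs_sub_rpow {a b : ℝ} (hr : -1 < r) (hab : a ≤ b) :
    ∫⁻ u in Set.Icc a b, ∫⁻ s in Set.Icc a b, ENNReal.ofReal (|u - s| ^ r) =
      ENNReal.ofReal (2 * (b - a) ^ (r + 2) / ((r + 1) * (r + 2))) := by
  have hr1 : 0 < r + 1 := by linarith
  have hr2 : 0 < r + 2 := by linarith
  set F : ℝ → ENNReal := fun x => ENNReal.ofReal (x ^ (r + 1) / (r + 1)) with hF
  have hinner : ∀ u ∈ Set.Icc a b,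
      ∫⁻ s in Set.Icc a b, ENNReal.ofReal (|u - s| ^ r) = F (u - a) + F (b - u) := fun u hu => by
    rw [setLIntegral_Icc_comp_abs_sub (fun x => ENNReal.ofReal (x ^ r)) hu,
      setLIntegral_Icc_rpow hr (sub_nonneg.2 hu.1), setLIntegral_Icc_rpow hr (sub_nonneg.2 hu.2)]
  have houter : ∫⁻ x in Set.Icc 0 (b - a), F x =
      ENNReal.ofReal ((b - a) ^ (r + 2) / ((r + 1) * (r + 2))) := by
    simp only [hF, div_eq_mul_inv _ (r + 1), ENNReal.ofReal_mul' (inv_nonneg.2 hr1.le)]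
    rw [lintegral_mul_const _ (by fun_prop), setLIntegral_Icc_rpow (by linarith) (sub_nonneg.2 hab),
      ← ENNReal.ofReal_mul' (inv_nonneg.2 hr1.le)]
    congr 1
    rw [show r + 1 + 1 = r + 2 by ring]
    field_simp
  have hnonneg : 0 ≤ (b - a) ^ (r + 2) / ((r + 1) * (r + 2)) :=
    div_nonneg (Real.rpow_nonneg (sub_nonneg.2 hab) _) (by positivity)
  rw [setLIntegral_congr_fun measurableSet_Icc hinner, lintegral_add_left (by fun_prop),
    setLIntegral_Icc_comp_sub_const F, setLIntegral_Icc_comp_const_sub F, sub_self, sub_self,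
    houter, ← ENNReal.ofReal_add hnonneg hnonneg, ← two_mul, mul_div_assoc]

theorem setLIntegral_Icc_prod_Icc_prod_abs_sub_rpow {ι : Type*} [Fintype ι] {a b : ι → ℝ}
    (hr : -1 < r) (hab : a ≤ b) :
    ∫⁻ p in Set.Icc a b ×ˢ Set.Icc a b, ENNReal.ofReal (∏ i, |p.1 i - p.2 i| ^ r) =
      ∏ i, ENNReal.ofReal (2 * (b i - a i) ^ (r + 2) / ((r + 1) * (r + 2))) := by
  simp_rw [ENNReal.ofReal_prod_of_nonneg fun _ _ => Real.rpow_nonneg (abs_nonneg _) r]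
  rw [Measure.volume_eq_prod, ← Measure.prod_restrict, ← Set.pi_univ_Icc, volume_pi,
    Measure.restrict_pi_pi, lintegral_pi_prod_pi_prod_eq_prod_lintegral
      (f := fun _ q => ENNReal.ofReal (|q.1 - q.2| ^ r)) fun _ => by fun_prop]
  refine Finset.prod_congr rfl fun i _ => ?_
  rw [lintegral_prod _ (by fun_prop), setLIntegral_setLIntegral_abs_sub_rpow hr (hab i)]

end Kernel

section GapProd

theorem prod_le_sum_div_card_pow_card {ι : Type*} (s : Finset ι) {z : ι → ℝ}
    (hz : ∀ i ∈ s, 0 ≤ z i) : ∏ i ∈ s, z i ≤ ((∑ i ∈ s, z i) / s.card) ^ s.card := by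
  rcases s.eq_empty_or_nonempty with rfl | hs
  · simp
  · have hcard : (0 : ℝ) < s.card := by exact_mod_cast hs.card_pos
    have hmean := Real.geom_mean_le_arith_mean s (fun _ => (1 : ℝ)) z (fun _ _ => zero_le_one)
      (by simpa using hcard) hz
    simp only [Real.rpow_one, one_mul, Finset.sum_const, nsmul_eq_mul, mul_one] at hmean
    rw [← Real.rpow_natCast]
    exact (Real.rpow_inv_le_iff_of_pos (Finset.prod_nonneg hz)
      (div_nonneg (Finset.sum_nonneg hz) hcard.le) hcard).1 hmean

theorem monotone_snoc {α : Type*} [Preorder α] {n : ℕ} {f : Fin n → α} {x : α}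
    (hf : Monotone f) (hx : ∀ i, f i ≤ x) : Monotone (Fin.snoc f x : Fin (n + 1) → α) := by
  intro i j hij
  induction j using Fin.lastCases with
  | last => induction i using Fin.lastCases <;> simp [hx]
  | cast j =>
    induction i using Fin.lastCases with
    | last => exact absurd hij (Fin.castSucc_lt_last j).not_ge
    | cast i => simpa using hf (Fin.castSucc_le_castSucc_iff.1 hij)

theorem prod_succ_sub_castSucc_le {n : ℕ} {w : Fin (n + 1) → ℝ} (hw : Monotone w) :
    ∏ j : Fin n, (w j.succ - w j.castSucc) ≤ ((w (Fin.last n) - w 0) / n) ^ n := by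
  have htelescope : ∑ j : Fin n, (w j.succ - w j.castSucc) = w (Fin.last n) - w 0 := by
    rw [Finset.sum_sub_distrib]
    linarith [Fin.sum_univ_succ w, Fin.sum_univ_castSucc w]
  simpa only [htelescope, Finset.card_univ, Fintype.card_fin] using
    prod_le_sum_div_card_pow_card Finset.univ (z := fun j : Fin n => w j.succ - w j.castSucc)
      fun j _ => sub_nonneg.2 (hw j.castSucc_le_succ)

variable {n : ℕ} {t : ℝ} {v : Fin n → ℝ}

theorem monotone_snoc_sort (hv : ∀ i, v i ≤ t) :
    Monotone (Fin.snoc (v ∘ Tuple.sort v) t : Fin (n + 1) → ℝ) :=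
  monotone_snoc (Tuple.monotone_sort v) fun _ => hv _

theorem gapProd_nonneg (hv : ∀ i, v i ≤ t) : 0 ≤ gapProd t v :=
  Finset.prod_nonneg fun j _ => sub_nonneg.2 (monotone_snoc_sort hv j.castSucc_le_succ)

theorem gapProd_le_pow_div_factorial (ht : 0 ≤ t) (hv : v ∈ Set.Icc 0 (fun _ => t)) :
    gapProd t v ≤ t ^ n / n ! := by
  set w : Fin (n + 1) → ℝ := Fin.snoc (v ∘ Tuple.sort v) t with hw
  have hmono : Monotone w := monotone_snoc_sort hv.2
  have hlast : w (Fin.last n) = t := Fin.snoc_last _ _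
  have hnonneg (i : Fin (n + 1)) : 0 ≤ w i := by
    induction i using Fin.lastCases with
    | last => rwa [hlast]
    | cast i => simpa [hw] using hv.1 (Tuple.sort v i)
  calc gapProd t v ≤ ((w (Fin.last n) - w 0) / n) ^ n := prod_succ_sub_castSucc_le hmono
    _ ≤ (t / n) ^ n := by
      have := hmono (Fin.zero_le (Fin.last n))
      gcongr
      linarith [hnonneg 0]
    _ = t ^ n / (n : ℝ) ^ n := div_pow _ _ _
    _ ≤ t ^ n / n ! := by gcongr; exact_mod_cast Nat.factorial_le_pow n

end GapProd

theorem setLIntegral_prod_abs_sub_rpow_mul_gapProd_rpow_le {n : ℕ} {r q t : ℝ} (hr : -1 < r)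
    (hq : 0 ≤ q) (ht : 0 ≤ t) :
    ∫⁻ p in Set.Icc (0 : Fin n → ℝ) (fun _ => t) ×ˢ Set.Icc (0 : Fin n → ℝ) (fun _ => t),
        ENNReal.ofReal ((∏ j, |p.1 j - p.2 j| ^ r) * (gapProd t p.1 * gapProd t p.2) ^ q) ≤
      ENNReal.ofReal ((2 * t ^ (r + 2) / ((r + 1) * (r + 2))) ^ n * (t ^ n / n !) ^ (2 * q)) := by
  have hpointwise : ∀ p ∈ Set.Icc (0 : Fin n → ℝ) (fun _ => t) ×ˢ
      Set.Icc (0 : Fin n → ℝ) (fun _ => t),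
      ENNReal.ofReal ((∏ j, |p.1 j - p.2 j| ^ r) * (gapProd t p.1 * gapProd t p.2) ^ q) ≤
        ENNReal.ofReal (∏ j, |p.1 j - p.2 j| ^ r) *
          ENNReal.ofReal ((t ^ n / n !) ^ (2 * q)) := by
    rintro p ⟨h₁, h₂⟩
    rw [← ENNReal.ofReal_mul (by positivity), Real.rpow_mul (by positivity), Real.rpow_two,
      pow_two]
    have hnonneg := gapProd_nonneg h₂.2
    gcongr
    · exact mul_nonneg (gapProd_nonneg h₁.2) hnonneg
    · exact gapProd_le_pow_div_factorial ht h₁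
    · exact gapProd_le_pow_div_factorial ht h₂
  have hconst : 0 ≤ 2 * t ^ (r + 2) / ((r + 1) * (r + 2)) :=
    div_nonneg (by positivity) (mul_nonneg (by linarith) (by linarith))
  refine (setLIntegral_mono' (measurableSet_Icc.prod measurableSet_Icc) hpointwise).trans_eq ?_
  rw [lintegral_mul_const' _ _ ENNReal.ofReal_ne_top,
    setLIntegral_Icc_prod_Icc_prod_abs_sub_rpow hr (show 0 ≤ fun _ => t from fun _ => ht),
    ENNReal.ofReal_mul (pow_nonneg hconst n), ENNReal.ofReal_pow hconst]
  simp

theorem stmt_13_general {H a t : ℝ} (hH : 1 / 2 < H) (ha : a ≤ 2) (n : ℕ) (ht : 0 ≤ t) :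
    ENNReal.ofReal (H * (2 * H - 1)) ^ n *
        ∫⁻ p in Set.Icc (0 : Fin n → ℝ) (fun _ => t) ×ˢ Set.Icc (0 : Fin n → ℝ) (fun _ => t),
          ENNReal.ofReal ((∏ j : Fin n, |p.1 j - p.2 j| ^ (2 * H - 2)) *
            (gapProd t p.1 * gapProd t p.2) ^ ((2 - a) / 2)) ≤
      ENNReal.ofReal (t ^ ((2 * H + 2 - a) * n) / (n ! : ℝ) ^ (2 - a)) := by
  have hα : 0 < H * (2 * H - 1) := mul_pos (by linarith) (by linarith)
  have hkernel : H * (2 * H - 1) *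
      (2 * t ^ (2 * H - 2 + 2) / ((2 * H - 2 + 1) * (2 * H - 2 + 2))) = t ^ (2 * H) := by
    rw [sub_add_cancel, show (2 * H - 2 + 1) * (2 * H) = 2 * (H * (2 * H - 1)) by ring,
      mul_div_mul_left _ _ two_ne_zero, mul_div_cancel₀ _ hα.ne']
  have hpow : t ^ ((2 * H + 2 - a) * n) = (t ^ (2 * H)) ^ n * (t ^ n) ^ (2 - a) := by
    rw [← Real.rpow_mul_natCast ht, ← Real.rpow_natCast_mul ht, ← Real.rpow_add_of_nonneg ht
      (by positivity) (mul_nonneg n.cast_nonneg (by linarith))]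
    congr 1
    ring
  calc _ ≤ ENNReal.ofReal (H * (2 * H - 1)) ^ n * ENNReal.ofReal
        ((2 * t ^ (2 * H - 2 + 2) / ((2 * H - 2 + 1) * (2 * H - 2 + 2))) ^ n *
          (t ^ n / n !) ^ (2 * ((2 - a) / 2))) := by
        gcongr
        exact setLIntegral_prod_abs_sub_rpow_mul_gapProd_rpow_le (by linarith) (by linarith) ht
    _ = ENNReal.ofReal (t ^ ((2 * H + 2 - a) * n) / (n ! : ℝ) ^ (2 - a)) := by
        rw [← ENNReal.ofReal_pow hα.le, ← ENNReal.ofReal_mul (pow_nonneg hα.le n), ← mul_assoc,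
          ← mul_pow, hkernel, mul_div_cancel₀ _ two_ne_zero, Real.div_rpow (by positivity)
          (by positivity), hpow, mul_div_assoc]

/-- For `H ∈ (1/2,1)`, `α_H = H(2H-1)` and `a ∈ [0,2)`, there is `c > 0` (depending only on `H`
and `a`) such that for all `n ≥ 1` and `t > 0`,
`α_Hⁿ ∫_{[0,t]^{2n}} ∏_j |t_j-s_j|^{2H-2} (β(𝐭)β(𝐬))^{(2-a)/2} d𝐭 d𝐬
  ≤ cⁿ t^{(2H+2-a)n} / (n!)^{2-a}`. -/
theorem stmt_13 (H : ℝ) (hH : H ∈ Set.Ioo (1 / 2 : ℝ) 1) (a : ℝ) (ha : a ∈ Set.Ico (0 : ℝ) 2) :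
    ∃ c : ℝ, 0 < c ∧ ∀ n : ℕ, 1 ≤ n → ∀ t : ℝ, 0 < t →
      ENNReal.ofReal (H * (2 * H - 1)) ^ n *
        ∫⁻ p in (Set.Icc (0 : Fin n → ℝ) (fun _ => t)) ×ˢ
            (Set.Icc (0 : Fin n → ℝ) (fun _ => t)),
          ENNReal.ofReal ((∏ j : Fin n, |p.1 j - p.2 j| ^ (2 * H - 2)) *
            (gapProd t p.1 * gapProd t p.2) ^ ((2 - a) / 2)) ≤
      ENNReal.ofReal (c ^ n * t ^ ((2 * H + 2 - a) * n) / (n ! : ℝ) ^ (2 - a)) := by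
  refine ⟨1, one_pos, fun n _ t ht => ?_⟩
  simpa only [one_pow, one_mul] using stmt_13_general hH.1 ha.2.le n ht.le
end

section
/- For every a ∈ (0,1) and every η ∈ ℝ, ∫_{ℝ} |ξ|^{a-1}/(1 + (ξ - η)²) dξ ≤ ∫_{ℝ} |ξ|^{a-1}/(1 + ξ²) dξ. In particular, sup_{η ∈ ℝ} ∫_{ℝ} |ξ|^{a-1}/(1 + (ξ - η)²) dξ = ∫_{ℝ} |ξ|^{a-1}/(1 + ξ²) dξ. -/
open MeasureTheory

/-!
Let `f` and `g` be even functions that vary together, such as two decreasing functions of `‖ξ‖`.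
For all `ξ` and `η` the two-point rearrangement inequality says
`f ξ * g (ξ - η) + f (ξ - η) * g ξ ≤ f ξ * g ξ + f (ξ - η) * g (ξ - η)`.
The reflection `ξ ↦ η - ξ` carries one term on the left to the other, and the translation
`ξ ↦ ξ - η` does so on the right, so integration gives `∫ f ξ * g (ξ - η) ≤ ∫ f ξ * g ξ`.
If `f` and `g` are nonnegative, the inequality also bounds `f ξ * g (ξ - η)` by an integrable
function as soon as `f * g` is integrable, which for radial `f` and `g` is a one-variable question.
-/

open Filter Asymptotics Module Set

section Rearrangement

variable {G : Type*} [AddCommGroup G] [MeasurableSpace G] [MeasurableAdd G]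
  {μ : Measure G} [μ.IsAddLeftInvariant] {f g : G → ℝ} {s : Set G}

theorem ae_mul_comp_sub_add_le_of_monovaryOn (hfg : MonovaryOn f g s) (hs : ∀ᵐ ξ ∂μ, ξ ∈ s)
    (η : G) :
    ∀ᵐ ξ ∂μ, f ξ * g (ξ - η) + f (ξ - η) * g ξ ≤ f ξ * g ξ + f (ξ - η) * g (ξ - η) := by
  have hs_sub : ∀ᵐ ξ ∂μ, ξ - η ∈ s :=
    (measurePreserving_sub_right μ η).quasiMeasurePreserving.ae hs
  filter_upwards [hs, hs_sub] with ξ hξ hξη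
  exact hfg.mul_add_mul_le_mul_add_mul hξ hξη

theorem integrable_mul_comp_sub_of_monovaryOn (hf : 0 ≤ f) (hg : 0 ≤ g)
    (hfg : MonovaryOn f g s) (hs : ∀ᵐ ξ ∂μ, ξ ∈ s) {η : G}
    (hmeas : AEStronglyMeasurable (fun ξ ↦ f ξ * g (ξ - η)) μ)
    (hint : Integrable (fun ξ ↦ f ξ * g ξ) μ) :
    Integrable (fun ξ ↦ f ξ * g (ξ - η)) μ := by
  refine (hint.add (hint.comp_sub_right η)).mono' hmeas ?_
  filter_upwards [ae_mul_comp_sub_add_le_of_monovaryOn hfg hs η] with ξ hξ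
  rw [Real.norm_of_nonneg (mul_nonneg (hf ξ) (hg (ξ - η)))]
  exact (le_add_of_nonneg_right (mul_nonneg (hf (ξ - η)) (hg ξ))).trans hξ

variable [MeasurableNeg G] [μ.IsNegInvariant]

theorem integral_mul_comp_sub_le_of_monovaryOn (hf : f.Even) (hg : g.Even)
    (hfg : MonovaryOn f g s) (hs : ∀ᵐ ξ ∂μ, ξ ∈ s) {η : G}
    (hint : Integrable (fun ξ ↦ f ξ * g ξ) μ)
    (hint_sub : Integrable (fun ξ ↦ f ξ * g (ξ - η)) μ) :
    ∫ ξ, f ξ * g (ξ - η) ∂μ ≤ ∫ ξ, f ξ * g ξ ∂μ := by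
  have reflect (ξ : G) : f (η - ξ) * g (η - ξ - η) = f (ξ - η) * g ξ := by
    rw [← neg_sub ξ η, hf, show -(ξ - η) - η = -ξ by abel, hg]
  have hint_reflect : Integrable (fun ξ ↦ f (ξ - η) * g ξ) μ := by
    simpa only [reflect] using hint_sub.comp_sub_left η
  have integral_reflect : ∫ ξ, f (ξ - η) * g ξ ∂μ = ∫ ξ, f ξ * g (ξ - η) ∂μ := by
    simpa only [reflect] using integral_sub_left_eq_self (fun ξ ↦ f ξ * g (ξ - η)) μ η
  have integral_translate : ∫ ξ, f (ξ - η) * g (ξ - η) ∂μ = ∫ ξ, f ξ * g ξ ∂μ :=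
    integral_sub_right_eq_self (fun ξ ↦ f ξ * g ξ) η
  have integral_rearrangement :=
    integral_mono_ae (hint_sub.add hint_reflect) (hint.add (hint.comp_sub_right η))
      (ae_mul_comp_sub_add_le_of_monovaryOn hfg hs η)
  simp only [Pi.add_apply] at integral_rearrangement
  rw [integral_add hint_sub hint_reflect, integral_add hint (hint.comp_sub_right η),
    integral_reflect, integral_translate] at integral_rearrangement
  linarith

end Rearrangement

theorem integrableOn_Ioi_rpow_mul_inv_one_add_sq {a : ℝ} (ha : 0 < a) (ha2 : a < 2) :
    IntegrableOn (fun t : ℝ ↦ t ^ (a - 1) * (1 + t ^ 2)⁻¹) (Ioi 0) := by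
  have hcont : Continuous fun t : ℝ ↦ (1 + t ^ 2)⁻¹ := by
    fun_prop (disch := intro; positivity)
  refine mellin_convergent_of_isBigO_scalar (a := 2) (b := 0)
    (hcont.locallyIntegrable.locallyIntegrableOn _) ?_ ha2 ?_ ha
  · refine IsBigO.of_bound 1 ?_
    filter_upwards [eventually_gt_atTop (0 : ℝ)] with t ht
    rw [Real.rpow_neg ht.le, Real.rpow_two, one_mul, Real.norm_of_nonneg (by positivity),
      Real.norm_of_nonneg (by positivity)]
    gcongr
    linarith
  · simpa using (hcont.tendsto 0).mono_left nhdsWithin_le_nhds |>.isBigO_one ℝ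

-- The origin is excluded because `0 ^ r = 0` for `r < 0`.
theorem monovaryOn_norm_rpow_inv_one_add_norm_sq {E : Type*} [NormedAddCommGroup E] {r : ℝ}
    (hr : r ≤ 0) :
    MonovaryOn (fun x : E ↦ ‖x‖ ^ r) (fun x ↦ (1 + ‖x‖ ^ 2)⁻¹) {0}ᶜ := by
  have hinv : AntitoneOn (fun t : ℝ ↦ (1 + t ^ 2)⁻¹) (Ioi 0) := fun t (ht : 0 < t) u _ htu ↦ by
    dsimp only
    gcongr
  refine ((Real.antitoneOn_rpow_Ioi_of_exponent_nonpos hr).monovaryOn hinv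
    |>.comp_right (norm : E → ℝ)).subset fun x hx ↦ ?_
  exact norm_pos_iff.2 hx

section NormedSpace

variable {E : Type*} [NormedAddCommGroup E] [NormedSpace ℝ E] [FiniteDimensional ℝ E]
  [MeasurableSpace E] [BorelSpace E] (μ : Measure E) [μ.IsAddHaarMeasure]

theorem integrable_norm_rpow_mul_inv_one_add_norm_sq [Nontrivial E] {a : ℝ} (ha : 0 < a)
    (ha2 : a < 2) :
    Integrable (fun ξ : E ↦ ‖ξ‖ ^ (a - finrank ℝ E) * (1 + ‖ξ‖ ^ 2)⁻¹) μ := by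
  rw [integrable_fun_norm_addHaar μ (f := fun t ↦ t ^ (a - finrank ℝ E) * (1 + t ^ 2)⁻¹)]
  refine (integrableOn_Ioi_rpow_mul_inv_one_add_sq ha ha2).congr_fun (fun t (ht : 0 < t) ↦ ?_)
    measurableSet_Ioi
  have hpow : t ^ (finrank ℝ E - 1) * t ^ (a - finrank ℝ E) = t ^ (a - 1) := by
    rw [← Real.rpow_natCast, ← Real.rpow_add ht, Nat.cast_pred finrank_pos]
    ring_nf
  rw [smul_eq_mul, ← mul_assoc, hpow]

theorem stmt_15_general {a : ℝ} (ha : 0 < a) (ha2 : a < 2) (had : a ≤ finrank ℝ E) :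
    IsGreatest (range fun η : E ↦ ∫ ξ, ‖ξ‖ ^ (a - finrank ℝ E) / (1 + ‖ξ - η‖ ^ 2) ∂μ)
      (∫ ξ, ‖ξ‖ ^ (a - finrank ℝ E) / (1 + ‖ξ‖ ^ 2) ∂μ) := by
  have : Nontrivial E := nontrivial_of_finrank_pos (R := ℝ) (mod_cast ha.trans_le had)
  refine ⟨⟨0, by simp only [sub_zero]⟩, forall_mem_range.2 fun η ↦ ?_⟩
  have hmono := monovaryOn_norm_rpow_inv_one_add_norm_sq (E := E) (sub_nonpos.2 had)
  have hint := integrable_norm_rpow_mul_inv_one_add_norm_sq μ ha ha2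
  have hint_sub := integrable_mul_comp_sub_of_monovaryOn (η := η) (fun _ ↦ by positivity)
    (fun _ ↦ by positivity) hmono (μ.ae_ne 0) (Measurable.aestronglyMeasurable (by fun_prop)) hint
  simpa only [div_eq_mul_inv] using integral_mul_comp_sub_le_of_monovaryOn
    (fun _ ↦ by simp only [norm_neg]) (fun _ ↦ by simp only [norm_neg]) hmono (μ.ae_ne 0)
    hint hint_sub

end NormedSpace

/-- For `a ∈ (0,1)`: for every `η ∈ ℝ`, `∫ |ξ|^{a-1}/(1+(ξ-η)²) dξ ≤ ∫ |ξ|^{a-1}/(1+ξ²) dξ`,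
and consequently `sup_η ∫ |ξ|^{a-1}/(1+(ξ-η)²) dξ = ∫ |ξ|^{a-1}/(1+ξ²) dξ`. -/
theorem stmt_15 (a : ℝ) (ha : a ∈ Set.Ioo (0 : ℝ) 1) :
    (∀ η : ℝ, (∫ ξ : ℝ, |ξ| ^ (a - 1) / (1 + (ξ - η) ^ 2)) ≤
      ∫ ξ : ℝ, |ξ| ^ (a - 1) / (1 + ξ ^ 2)) ∧
    (⨆ η : ℝ, ∫ ξ : ℝ, |ξ| ^ (a - 1) / (1 + (ξ - η) ^ 2)) =
      ∫ ξ : ℝ, |ξ| ^ (a - 1) / (1 + ξ ^ 2) := by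
  have h := stmt_15_general (volume : Measure ℝ) ha.1 (by linarith [ha.2]) (by simpa using ha.2.le)
  simp only [finrank_self, Nat.cast_one, Real.norm_eq_abs, sq_abs] at h
  exact ⟨fun η ↦ h.2 ⟨η, rfl⟩, h.csSup_eq⟩
end
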